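/- In the Coxeter group of type A_n, the number of distinct labels iota in N^n for which there exists at least one uniquely labelled geodesic with label iota (including the zero label of the empty word) equals (n^4 - 2n^3 + 17n^2 - 4n + 12)/12. -/

import Mathlib

/-- The Coxeter system of type `Aₙ` (with `n` generators, indexed by `Fin n`). -/
noncomputable def csA (n : ℕ) :
    CoxeterSystem (CoxeterMatrix.Aₙ n) (CoxeterMatrix.Aₙ n).Group :=
  (CoxeterMatrix.Aₙ n).toCoxeterSystem

/-- A word `ω` in the generators of the Coxeter group of type `Aₙ` is a
uniquely labelled geodesic (u.l.g.) if it is reduced and every reduced word with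
the same product and the same label (number of occurrences of each letter) equals `ω`. -/
def IsULGA (n : ℕ) (ω : List (Fin n)) : Prop :=
  (csA n).IsReduced ω ∧
    ∀ ω' : List (Fin n), (csA n).IsReduced ω' →
      (csA n).wordProd ω' = (csA n).wordProd ω →
      (∀ i : Fin n, ω'.count i = ω.count i) → ω' = ω

/-!
Consecutive letters of a uniquely labelled geodesic in type `A` neither coincide nor commute, so it
is a walk on the Dynkin line. If a monotone run of the walk lies between two others and is at most
as long as one of them, then the walk contains a palindrome `x, …, x + kε, …, x` with `k ≥ 1`,
preceded or followed by `x + ε`, and the braid relation rewrites such a word to another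
rearrangement of it or to a shorter word. Hence there are at most three monotone runs, and if there
are three then the middle one is longer than the others. Conversely such walks are uniquely labelled
geodesics, as one sees by letting `sᵢ` act on `ℤ` as the transposition of `i` and `i + 1`: another
rearrangement of the word would have to start with another descent of the permutation. Only a
turning point `j` that occurs once in the word is a candidate, and then the rest of the
rearrangement would preserve `{x | x ≤ j}`, which is not the case.

The label of a walk with at most three runs is a sum of three indicator functions of intervals.
Its support determines the position and the length `m` of the middle run, and its discrete
derivative determines the lengths `i` and `j` of the outer runs, except that all `i` and `j` with
`i + j + 1 = m` give the same label.
-/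

open Equiv

/-! ### Uniquely labelled geodesics over a family of monoid elements -/

section Monoid

variable {α β M N : Type*} [Monoid M] [Monoid N]

/-- Uniquely labelled geodesics over an arbitrary family `s` of elements of a monoid: `w` is a
shortest word for its product, and no other rearrangement of `w` has the same product. -/
def IsULG (s : α → M) (w : List α) : Prop :=
  (∀ v : List α, (v.map s).prod = (w.map s).prod → w.length ≤ v.length) ∧
    ∀ v : List α, v.Perm w → (v.map s).prod = (w.map s).prod → v = w

theorem IsULG.of_infix {s : α → M} {u w : List α} (h : IsULG s w) (hu : u <:+: w) :
    IsULG s u := by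
  obtain ⟨p, q, rfl⟩ := hu
  refine ⟨fun v hv => ?_, fun v hperm hv => ?_⟩
  · have := h.1 (p ++ v ++ q) (by simp [hv])
    simp only [List.length_append] at this
    omega
  · have := h.2 (p ++ v ++ q) ((hperm.append_left p).append_right q) (by simp [hv])
    simpa using this

theorem IsULG.of_cons {s : α → M} {x : α} {w : List α} (h : IsULG s (x :: w)) : IsULG s w :=
  h.of_infix (List.suffix_cons x w).isInfix

theorem IsULG.of_map {s : α → M} {t : β → N} {f : α → β} (hf : f.Injective) (φ : M →* N)
    (hφ : ∀ a, φ (s a) = t (f a)) {w : List α} (h : IsULG t (w.map f)) : IsULG s w := by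
  have hprod (v : List α) : ((v.map f).map t).prod = φ (v.map s).prod := by
    simp [map_list_prod, Function.comp_def, hφ]
  refine ⟨fun v hv => ?_, fun v hperm hv => ?_⟩
  · simpa using h.1 (v.map f) (by rw [hprod, hprod, hv])
  · exact hf.list_map (h.2 (v.map f) (hperm.map f) (by rw [hprod, hprod, hv]))

theorem exists_length_le_prod_map_extend_one (s : α → M) {f : α → β} (hf : f.Injective)
    (v : List β) : ∃ u : List α, u.length ≤ v.length ∧
      (u.map s).prod = (v.map (Function.extend f s 1)).prod := by
  induction v with
  | nil => exact ⟨[], le_rfl, rfl⟩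
  | cons y v ih =>
    obtain ⟨u, hlen, hprod⟩ := ih
    by_cases hy : ∃ a, f a = y
    · obtain ⟨a, rfl⟩ := hy
      exact ⟨a :: u, by simpa using hlen, by simp [hprod, hf.extend_apply]⟩
    · exact ⟨u, hlen.trans (by simp), by simp [hprod, Function.extend_apply' _ _ _ hy]⟩

theorem IsULG.map_extend_one {s : α → M} {f : α → β} (hf : f.Injective) {w : List α}
    (h : IsULG s w) : IsULG (Function.extend f s 1) (w.map f) := by
  have hprod (v : List α) :
      ((v.map f).map (Function.extend f s 1)).prod = (v.map s).prod := by
    simp [Function.comp_def, hf.extend_apply]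
  refine ⟨fun v hv => ?_, fun v hperm hv => ?_⟩
  · obtain ⟨u, hlen, hu⟩ := exists_length_le_prod_map_extend_one s hf v
    rw [List.length_map]
    exact (h.1 u (by rw [hu, hv, hprod])).trans hlen
  · obtain ⟨u, rfl⟩ : v ∈ Set.range (List.map f) := by
      rw [Set.range_list_map]
      intro y hy
      obtain ⟨a, -, rfl⟩ := List.mem_map.1 (hperm.mem_iff.1 hy)
      exact ⟨a, rfl⟩
    rw [h.2 u ((List.map_perm_map_iff hf).1 hperm) (by rw [← hprod, hv, hprod])]

theorem IsULG.apply_ne_one {s : α → M} {x : α} (h : IsULG s [x]) : s x ≠ 1 := fun hx => by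
  simpa using h.1 [] (by simp [hx])

end Monoid

section TypeA

variable {G : Type*} [Group G] {s : ℤ → G}

/-- The relations of type `A` for a family indexed by `ℤ`. The braid relation is only imposed
between nontrivial elements, so that a finite family `s₀, …, sₙ₋₁` of generators of type `Aₙ` can be
extended to `ℤ` by `1`. -/
structure IsTypeA (s : ℤ → G) : Prop where
  mul_self (x : ℤ) : s x * s x = 1
  commute {x y : ℤ} (h : x + 1 < y) : Commute (s x) (s y)
  braid (x : ℤ) (hx : s x ≠ 1) (hx' : s (x + 1) ≠ 1) :
    s x * s (x + 1) * s x = s (x + 1) * s x * s (x + 1)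

namespace IsTypeA

theorem commute_of_far (hs : IsTypeA s) {x y : ℤ} (h : x + 1 < y ∨ y + 1 < x) :
    Commute (s x) (s y) :=
  h.elim hs.commute fun h => (hs.commute h).symm

theorem prod_map_reverse (hs : IsTypeA s) (w : List ℤ) :
    (w.reverse.map s).prod = (w.map s).prod⁻¹ := by
  have hinv (x : ℤ) : (s x)⁻¹ = s x := inv_eq_of_mul_eq_one_left (hs.mul_self x)
  simp [List.prod_inv_reverse, Function.comp_def, hinv]

theorem isULG_reverse (hs : IsTypeA s) {w : List ℤ} (h : IsULG s w) : IsULG s w.reverse := by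
  have hprod {v : List ℤ} (hv : (v.map s).prod = (w.reverse.map s).prod) :
      (v.reverse.map s).prod = (w.map s).prod := by
    rw [hs.prod_map_reverse, hv, hs.prod_map_reverse, inv_inv]
  refine ⟨fun v hv => ?_, fun v hperm hv => ?_⟩
  · simpa using h.1 v.reverse (hprod hv)
  · rw [← h.2 v.reverse (by simpa [List.perm_reverse] using hperm) (hprod hv), List.reverse_reverse]

theorem adjacent_of_isULG (hs : IsTypeA s) {x y : ℤ} (h : IsULG s [x, y]) :
    y = x + 1 ∨ y = x - 1 := by
  have hne : x ≠ y := by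
    rintro rfl
    simpa using h.1 [] (by simp [hs.mul_self])
  by_contra hadj
  have hcomm : Commute (s x) (s y) := hs.commute_of_far (by omega)
  have := h.2 [y, x] (.swap x y []) (by simp [hcomm.eq])
  simp_all

theorem braid_of_isULG (hs : IsTypeA s) {x y : ℤ} (h : IsULG s [x, y]) :
    s x * s y * s x = s y * s x * s y := by
  have hx : s x ≠ 1 := (h.of_infix (u := [x]) ⟨[], [y], rfl⟩).apply_ne_one
  have hy : s y ≠ 1 := h.of_cons.apply_ne_one
  rcases hs.adjacent_of_isULG h with rfl | rfl
  · exact hs.braid x hx hy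
  · simpa using (hs.braid (x - 1) hy (by simpa using hx)).symm

end IsTypeA

/-- The word `x, x + ε, …, x + k * ε, …, x + ε, x`. -/
def palindrome (ε x : ℤ) : ℕ → List ℤ
  | 0 => [x]
  | k + 1 => x :: (palindrome ε (x + ε) k ++ [x])

theorem reverse_palindrome (ε x : ℤ) (k : ℕ) : (palindrome ε x k).reverse = palindrome ε x k := by
  induction k generalizing x with
  | zero => rfl
  | succ k ih => simp [palindrome, ih]

theorem exists_eq_add_mul_of_mem_palindrome {ε x y : ℤ} {k : ℕ} (h : y ∈ palindrome ε x k) :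
    ∃ t : ℕ, y = x + ε * t := by
  induction k generalizing x with
  | zero => exact ⟨0, by simpa [palindrome] using h⟩
  | succ k ih =>
    simp only [palindrome, List.mem_cons, List.mem_append, List.not_mem_nil, or_false] at h
    rcases h with rfl | h | rfl
    · exact ⟨0, by simp⟩
    · obtain ⟨t, rfl⟩ := ih h
      exact ⟨t + 1, by push_cast; ring⟩
    · exact ⟨0, by simp⟩

theorem IsTypeA.commute_prod_palindrome (hs : IsTypeA s) {ε : ℤ} (hε : ε = 1 ∨ ε = -1) (x : ℤ)
    (k : ℕ) : Commute (s x) ((palindrome ε (x + ε + ε) k).map s).prod := by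
  refine Commute.list_prod_right _ _ fun g hg => ?_
  obtain ⟨y, hy, rfl⟩ := List.mem_map.1 hg
  obtain ⟨t, rfl⟩ := exists_eq_add_mul_of_mem_palindrome hy
  exact hs.commute_of_far (by rcases hε with rfl | rfl <;> omega)

theorem mul_conj_mul_mul_eq_of_braid {M : Type*} [Monoid M] {a b c : M}
    (hab : a * b * a = b * a * b) (hac : Commute a c) :
    a * (b * (c * (b * (a * b)))) = b * (a * (b * (c * (b * a)))) := by
  calc a * (b * (c * (b * (a * b)))) = a * b * c * (b * a * b) := by simp only [mul_assoc]
    _ = a * b * (c * a) * b * a := by rw [← hab]; simp only [mul_assoc]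
    _ = a * b * a * c * b * a := by rw [← hac.eq]; simp only [mul_assoc]
    _ = b * (a * (b * (c * (b * a)))) := by rw [hab]; simp only [mul_assoc]

theorem not_isULG_palindrome_append (hs : IsTypeA s) {ε : ℤ} (hε : ε = 1 ∨ ε = -1) (x : ℤ)
    (k : ℕ) : ¬ IsULG s (palindrome ε x (k + 1) ++ [x + ε]) := by
  intro h
  cases k with
  | zero =>
    have hbraid := hs.braid_of_isULG (h.of_infix (u := [x, x + ε]) ⟨[], [x, x + ε], rfl⟩)
    have hprod : s x * (s (x + ε) * (s x * s (x + ε))) = s (x + ε) * s x := by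
      rw [← mul_assoc (s (x + ε)), ← mul_assoc (s x), ← mul_assoc (s x), hbraid, mul_assoc,
        hs.mul_self, mul_one]
    simpa [palindrome] using h.1 [x + ε, x] (by simp [palindrome, hprod])
  | succ k =>
    simp only [palindrome, List.cons_append, List.append_assoc, List.nil_append] at h
    have hbraid := hs.braid_of_isULG (h.of_infix (u := [x, x + ε]) ⟨[], _, rfl⟩)
    have hflip := mul_conj_mul_mul_eq_of_braid hbraid (hs.commute_prod_palindrome hε x k)
    have heq := h.2 ((x + ε) :: x :: (x + ε) :: (palindrome ε (x + ε + ε) k ++ [x + ε, x]))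
      (by rw [List.perm_iff_count]; intro z; simp only [List.count_cons, List.count_append]; ring)
      (by simpa using hflip.symm)
    have : x + ε = x := (List.cons_eq_cons.1 heq).1
    omega

theorem not_isULG_cons_palindrome (hs : IsTypeA s) {ε : ℤ} (hε : ε = 1 ∨ ε = -1) (x : ℤ)
    (k : ℕ) : ¬ IsULG s ((x + ε) :: palindrome ε x (k + 1)) := fun h =>
  not_isULG_palindrome_append hs hε x k <| by
    simpa [reverse_palindrome] using hs.isULG_reverse h

/-- The monotone word `x, x + ε, x + 2 * ε, …` with `k` letters. -/
def run (ε x : ℤ) (k : ℕ) : List ℤ := List.iterate (· + ε) x k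

theorem run_zero (ε x : ℤ) : run ε x 0 = [] := rfl

theorem run_succ (ε x : ℤ) (k : ℕ) : run ε x (k + 1) = x :: run ε (x + ε) k := rfl

theorem run_add (ε x : ℤ) (k l : ℕ) : run ε x (k + l) = run ε x k ++ run ε (x + ε * k) l := by
  induction k generalizing x with
  | zero => simp [run_zero]
  | succ k ih =>
    rw [Nat.add_right_comm, run_succ, run_succ, ih, List.cons_append]
    push_cast
    congr 3
    ring

/-- The walk that starts at `x` and makes `a` steps in the direction `ε`, then `b` steps in the
direction `-ε` and finally `c` steps in the direction `ε`. It has `a + b + c + 1` letters. -/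
def zigzag (ε x : ℤ) (a b c : ℕ) : List ℤ :=
  run ε x a ++ run (-ε) (x + ε * a) b ++ run ε (x + ε * a - ε * b) (c + 1)

theorem zigzag_succ (ε x : ℤ) (a b c : ℕ) :
    zigzag ε x (a + 1) b c = x :: zigzag ε (x + ε) a b c := by
  have hx : x + ε * (a + 1 : ℕ) = x + ε + ε * a := by push_cast; ring
  rw [zigzag, zigzag, run_succ ε x a, hx]
  rfl

theorem zigzag_zero (ε x : ℤ) (b c : ℕ) : zigzag ε x 0 b c = zigzag (-ε) x b c 0 := by
  have hx : x + ε * (0 : ℕ) = x := by simp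
  rw [zigzag, zigzag, hx, run_zero, List.nil_append, run_add _ _ c 1, ← List.append_assoc, neg_neg,
    neg_mul, neg_mul, ← sub_eq_add_neg, sub_neg_eq_add]
  rfl

theorem exists_zigzag_eq_cons (ε x : ℤ) (a b c : ℕ) : ∃ w, zigzag ε x a b c = x :: w := by
  cases a with
  | succ a => exact ⟨_, zigzag_succ ε x a b c⟩
  | zero =>
    rw [zigzag_zero]
    cases b with
    | succ b => exact ⟨_, zigzag_succ (-ε) x b c 0⟩
    | zero =>
      rw [zigzag_zero, neg_neg]
      cases c with
      | succ c => exact ⟨_, zigzag_succ ε x c 0 0⟩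
      | zero => exact ⟨[], by simp [zigzag, run_zero, run_succ]⟩

theorem run_append_run_append_singleton (ε x : ℤ) (a : ℕ) :
    run ε x a ++ run (-ε) (x + ε * a) a ++ [x] = palindrome ε x a := by
  induction a generalizing x with
  | zero => simp [run_zero, palindrome]
  | succ a ih =>
    have hx : x + ε * (a + 1 : ℕ) = x + ε + ε * a := by push_cast; ring
    rw [palindrome, ← ih, hx, run_succ, run_add _ _ a 1]
    simp [run_succ, run_zero]

theorem zigzag_add (ε x : ℤ) (a d c : ℕ) :
    zigzag ε x a (a + d) c = run ε x a ++ run (-ε) (x + ε * a) a ++ zigzag ε x 0 d c := by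
  have hx : x + ε * a + -ε * a = x := by ring
  have hx' : x + ε * a - ε * (a + d : ℕ) = x - ε * d := by push_cast; ring
  simp only [zigzag, run_add _ _ a d, run_zero, hx, hx']
  simp

theorem palindrome_prefix_zigzag (ε x : ℤ) {a b : ℕ} (hab : a ≤ b) (c : ℕ) :
    palindrome ε x a <+: zigzag ε x a b c := by
  obtain ⟨d, rfl⟩ := Nat.exists_eq_add_of_le hab
  obtain ⟨w, hw⟩ := exists_zigzag_eq_cons ε x 0 d c
  exact ⟨w, by rw [← run_append_run_append_singleton, zigzag_add, hw]; simp⟩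

theorem palindrome_append_prefix_zigzag (ε x : ℤ) (a c : ℕ) :
    palindrome ε x a ++ [x + ε] <+: zigzag ε x a a (c + 1) := by
  obtain ⟨w, hw⟩ := exists_zigzag_eq_cons ε (x + ε) c 0 0
  have hx : zigzag ε x 0 0 (c + 1) = x :: (x + ε) :: w := by
    rw [zigzag_zero, zigzag_zero, neg_neg, zigzag_succ, hw]
  have hzigzag := zigzag_add ε x a 0 (c + 1)
  rw [hx] at hzigzag
  exact ⟨w, by simpa [← run_append_run_append_singleton] using hzigzag.symm⟩

theorem exists_zigzag_cons_eq (hs : IsTypeA s) {ε x y : ℤ} (hε : ε = 1 ∨ ε = -1) {a b c : ℕ}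
    (hshape : c = 0 ∨ a < b ∧ c < b) (hxy : y = x + 1 ∨ y = x - 1)
    (h : IsULG s (x :: zigzag ε y a b c)) :
    ∃ δ : ℤ, (δ = 1 ∨ δ = -1) ∧ ∃ a' b' c' : ℕ, (c' = 0 ∨ a' < b' ∧ c' < b') ∧
      x :: zigzag ε y a b c = zigzag δ x a' b' c' := by
  obtain rfl | rfl : y = x + ε ∨ x = y + ε := by omega
  · refine ⟨ε, hε, a + 1, b, c, ?_, (zigzag_succ ε x a b c).symm⟩
    by_contra hbad
    obtain ⟨rfl, hc⟩ : b = a + 1 ∧ c ≠ 0 := by omega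
    obtain ⟨c, rfl⟩ := Nat.exists_eq_succ_of_ne_zero hc
    rw [← zigzag_succ] at h
    exact not_isULG_palindrome_append hs hε x a
      (h.of_infix (palindrome_append_prefix_zigzag ε x (a + 1) c).isInfix)
  · have hy : y + ε + -ε = y := by ring
    rcases a with _ | a
    · exact ⟨-ε, by omega, b + 1, c, 0, .inl rfl, by rw [zigzag_succ, hy, zigzag_zero]⟩
    · rcases le_or_gt (a + 1) b with hab | hab
      · exact (not_isULG_cons_palindrome hs hε y a (h.of_infix
          ((List.cons_prefix_cons.2 ⟨rfl, palindrome_prefix_zigzag ε y hab c⟩).isInfix))).elim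
      · obtain rfl : c = 0 := by omega
        refine ⟨-ε, by omega, 1, a + 1, b, by omega, ?_⟩
        rw [zigzag_succ (-ε), hy, zigzag_zero, neg_neg]

theorem IsULG.exists_zigzag (hs : IsTypeA s) {x : ℤ} {w : List ℤ} (h : IsULG s (x :: w)) :
    ∃ ε : ℤ, (ε = 1 ∨ ε = -1) ∧ ∃ a b c : ℕ, (c = 0 ∨ a < b ∧ c < b) ∧
      x :: w = zigzag ε x a b c := by
  induction w generalizing x with
  | nil => exact ⟨1, .inl rfl, 0, 0, 0, .inl rfl, by simp [zigzag, run_zero, run_succ]⟩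
  | cons y w ih =>
    obtain ⟨ε, hε, a, b, c, hshape, hw⟩ := ih h.of_cons
    have hxy := hs.adjacent_of_isULG (h.of_infix (u := [x, y]) ⟨[], w, rfl⟩)
    rw [hw] at h ⊢
    exact exists_zigzag_cons_eq hs hε hshape hxy h

end TypeA

/-! ### Zigzags of adjacent transpositions -/

theorem count_run_one (x : ℤ) (k : ℕ) (y : ℤ) :
    (run 1 x k).count y = if x ≤ y ∧ y < x + k then 1 else 0 := by
  induction k generalizing x with
  | zero => simp [run_zero]
  | succ k ih =>
    rw [run_succ, List.count_cons, ih]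
    grind

theorem count_run_neg_one (x : ℤ) (k : ℕ) (y : ℤ) :
    (run (-1) x k).count y = if x - k < y ∧ y ≤ x then 1 else 0 := by
  induction k generalizing x with
  | zero => simp [run_zero]
  | succ k ih =>
    rw [run_succ, List.count_cons, ih]
    grind

/-- The label of a zigzag whose middle run goes from `c` up to `c + m`, or from `c + m` down to `c`,
whose other run at `c` has `i` steps and whose other run at `c + m` has `j` steps. -/
def zigzagLabel (c : ℤ) (m i j : ℕ) (x : ℤ) : ℕ :=
  (if c ≤ x ∧ x ≤ c + m then 1 else 0) + (if c < x ∧ x ≤ c + i then 1 else 0) +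
    if c + m - j ≤ x ∧ x < c + m then 1 else 0

theorem count_zigzag_neg_one (x : ℤ) (a b c : ℕ) (y : ℤ) :
    (zigzag (-1) x a b c).count y = zigzagLabel (x - a) b a c y := by
  rw [zigzag, List.count_append, List.count_append, neg_neg, count_run_one, count_run_neg_one,
    count_run_neg_one, zigzagLabel]
  grind

theorem count_zigzag_one (x : ℤ) (a b c : ℕ) (y : ℤ) :
    (zigzag 1 x a b c).count y = zigzagLabel (x + a - b) b c a y := by
  rw [zigzag, List.count_append, List.count_append, count_run_one, count_run_one,
    count_run_neg_one, zigzagLabel]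
  grind

/-- The transposition of `i` and `i + 1`. -/
def adjSwap (i : ℤ) : Perm ℤ := swap i (i + 1)

theorem adjSwap_apply (i x : ℤ) :
    adjSwap i x = if x = i then i + 1 else if x = i + 1 then i else x := swap_apply_def ..

theorem adjSwap_mul_self (i : ℤ) : adjSwap i * adjSwap i = 1 := swap_mul_self ..

/-- The product of the adjacent transpositions named by the letters of a word. -/
def wordPerm (w : List ℤ) : Perm ℤ := (w.map adjSwap).prod

theorem wordPerm_cons (i : ℤ) (w : List ℤ) : wordPerm (i :: w) = adjSwap i * wordPerm w := by
  simp [wordPerm]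

theorem wordPerm_cons_inv_apply (i : ℤ) (w : List ℤ) (x : ℤ) :
    (wordPerm (i :: w))⁻¹ x = (wordPerm w)⁻¹ (adjSwap i x) := by
  rw [wordPerm_cons, mul_inv_rev, inv_eq_of_mul_eq_one_left (adjSwap_mul_self i), Perm.mul_apply]

theorem wordPerm_append_inv_apply (v w : List ℤ) (x : ℤ) :
    (wordPerm (v ++ w))⁻¹ x = (wordPerm w)⁻¹ ((wordPerm v)⁻¹ x) := by
  simp [wordPerm]

/-- The set of inversions of a permutation of `ℤ`. -/
def inversions (π : Perm ℤ) : Set (ℤ × ℤ) := {q | q.1 < q.2 ∧ π q.2 < π q.1}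

theorem inversions_one : inversions 1 = ∅ :=
  Set.eq_empty_of_forall_notMem fun _ hq => hq.1.asymm hq.2

theorem inversions_adjSwap_mul_subset (π : Perm ℤ) (i : ℤ) :
    inversions (adjSwap i * π) ⊆ insert (π⁻¹ i, π⁻¹ (i + 1)) (inversions π) := by
  rintro ⟨x, y⟩ ⟨hxy, h⟩
  have hne : π x ≠ π y := fun e => hxy.ne (π.injective e)
  simp only [Perm.mul_apply, adjSwap_apply] at h
  rw [Set.mem_insert_iff]
  by_cases hlt : π y < π x
  · exact .inr ⟨hxy, hlt⟩
  · have hx : π x = i := by grind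
    have hy : π y = i + 1 := by grind
    exact .inl (Prod.ext (Perm.eq_inv_iff_eq.2 hx) (Perm.eq_inv_iff_eq.2 hy))

theorem insert_inversions_subset (π : Perm ℤ) (i : ℤ) (h : π⁻¹ i < π⁻¹ (i + 1)) :
    insert (π⁻¹ i, π⁻¹ (i + 1)) (inversions π) ⊆ inversions (adjSwap i * π) := by
  rintro ⟨x, y⟩ (hq | ⟨hxy, hlt⟩)
  · obtain ⟨rfl, rfl⟩ := Prod.ext_iff.1 hq
    exact ⟨h, by simp [adjSwap_apply]⟩
  · refine ⟨hxy, ?_⟩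
    dsimp only at hxy hlt
    have : ¬ (π y = i ∧ π x = i + 1) := by
      rintro ⟨hy, hx⟩
      rw [← Perm.eq_inv_iff_eq.2 hx, ← Perm.eq_inv_iff_eq.2 hy] at h
      omega
    simp only [Perm.mul_apply, adjSwap_apply]
    grind

theorem finite_inversions_wordPerm (w : List ℤ) : (inversions (wordPerm w)).Finite := by
  induction w with
  | nil => simp [wordPerm, inversions_one]
  | cons i w ih =>
    rw [wordPerm_cons]
    exact (ih.insert _).subset (inversions_adjSwap_mul_subset _ _)

theorem ncard_inversions_wordPerm_le_length (w : List ℤ) :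
    (inversions (wordPerm w)).ncard ≤ w.length := by
  induction w with
  | nil => simp [wordPerm, inversions_one]
  | cons i w ih =>
    rw [wordPerm_cons, List.length_cons]
    exact (Set.ncard_le_ncard (inversions_adjSwap_mul_subset _ _)
      ((finite_inversions_wordPerm w).insert _)).trans
        ((Set.ncard_insert_le _ _).trans (Nat.succ_le_succ ih))

theorem ncard_inversions_wordPerm_cons {i : ℤ} {w : List ℤ}
    (h : (wordPerm (i :: w))⁻¹ (i + 1) < (wordPerm (i :: w))⁻¹ i) :
    (inversions (wordPerm (i :: w))).ncard = (inversions (wordPerm w)).ncard + 1 := by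
  have h : (wordPerm w)⁻¹ i < (wordPerm w)⁻¹ (i + 1) := by
    simpa [wordPerm_cons_inv_apply, adjSwap_apply] using h
  rw [wordPerm_cons,
    (inversions_adjSwap_mul_subset _ _).antisymm (insert_inversions_subset _ _ h),
    Set.ncard_insert_of_notMem _ (finite_inversions_wordPerm w)]
  rintro ⟨-, hlt⟩
  simp at hlt

theorem descent_of_ncard_inversions_eq_length {i : ℤ} {w : List ℤ}
    (h : (inversions (wordPerm (i :: w))).ncard = (i :: w).length) :
    (wordPerm (i :: w))⁻¹ (i + 1) < (wordPerm (i :: w))⁻¹ i := by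
  by_contra hlt
  have hne : (wordPerm (i :: w))⁻¹ (i + 1) ≠ (wordPerm (i :: w))⁻¹ i := fun e => by
    have := (wordPerm (i :: w))⁻¹.injective e
    omega
  have hw : adjSwap i * wordPerm (i :: w) = wordPerm w := by
    rw [wordPerm_cons, ← mul_assoc, adjSwap_mul_self, one_mul]
  have hsub := insert_inversions_subset (wordPerm (i :: w)) i (by omega)
  rw [hw] at hsub
  have hle := Set.ncard_le_ncard ((Set.subset_insert _ _).trans hsub)
    (finite_inversions_wordPerm w)
  have hlen := ncard_inversions_wordPerm_le_length w
  rw [List.length_cons] at h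
  omega

theorem wordPerm_inv_le_iff {w : List ℤ} {j : ℤ} (hj : j ∉ w) (x : ℤ) :
    (wordPerm w)⁻¹ x ≤ j ↔ x ≤ j := by
  induction w generalizing x with
  | nil => simp [wordPerm]
  | cons i w ih =>
    rw [List.mem_cons, not_or] at hj
    rw [wordPerm_cons_inv_apply, ih hj.2, adjSwap_apply]
    grind

theorem wordPerm_cons_inv_crosses {w : List ℤ} {j : ℤ} (hj : j ∉ w) :
    (wordPerm (j :: w))⁻¹ (j + 1) ≤ j ∧ j < (wordPerm (j :: w))⁻¹ j := by
  have hle := wordPerm_inv_le_iff hj j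
  have hlt := wordPerm_inv_le_iff hj (j + 1)
  rw [wordPerm_cons_inv_apply, wordPerm_cons_inv_apply, adjSwap_apply, adjSwap_apply]
  grind

/-- A word is rigid if its length is the number of inversions of its permutation and no other
rearrangement of it gives the same permutation. -/
def IsRigid (w : List ℤ) : Prop :=
  (inversions (wordPerm w)).ncard = w.length ∧
    ∀ v : List ℤ, v.Perm w → wordPerm v = wordPerm w → v = w

theorem IsRigid.isULG {w : List ℤ} (h : IsRigid w) : IsULG adjSwap w := by
  refine ⟨fun v hv => ?_, h.2⟩
  have hv : wordPerm v = wordPerm w := hv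
  rw [← h.1, ← hv]
  exact ncard_inversions_wordPerm_le_length v

theorem IsRigid.nil : IsRigid [] :=
  ⟨by simp [wordPerm, inversions_one], fun _ h _ => h.eq_nil⟩

-- A competing rearrangement starts with another descent `j`; if `j` occurs only once, then the rest
-- of that word preserves `{x | x ≤ j}`.
theorem IsRigid.cons {i : ℤ} {w : List ℤ} (hw : IsRigid w)
    (hi : (wordPerm (i :: w))⁻¹ (i + 1) < (wordPerm (i :: w))⁻¹ i)
    (hdesc : ∀ j ∈ w, j ≠ i → (wordPerm (i :: w))⁻¹ (j + 1) < (wordPerm (i :: w))⁻¹ j →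
      w.count j = 1 ∧ ¬ ((wordPerm (i :: w))⁻¹ (j + 1) ≤ j ∧ j < (wordPerm (i :: w))⁻¹ j)) :
    IsRigid (i :: w) := by
  have hcard : (inversions (wordPerm (i :: w))).ncard = (i :: w).length := by
    rw [ncard_inversions_wordPerm_cons hi, hw.1, List.length_cons]
  refine ⟨hcard, fun v hv hπ => ?_⟩
  rcases v with _ | ⟨j, v⟩
  · simpa using hv.length_eq
  by_cases hji : j = i
  · subst hji
    rw [hw.2 v ((List.perm_cons j).1 hv) (by simpa [wordPerm_cons] using hπ)]
  · have hmem : j ∈ w := (List.mem_cons.1 (hv.subset List.mem_cons_self)).resolve_left hji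
    have hj := descent_of_ncard_inversions_eq_length (i := j) (w := v)
      (by rw [hπ, hcard, hv.length_eq])
    obtain ⟨hcount, hcross⟩ := hdesc j hmem hji (hπ ▸ hj)
    have hnot : j ∉ v := by
      have := hv.count_eq j
      rw [List.count_cons_self, List.count_cons_of_ne (Ne.symm hji), hcount] at this
      exact List.count_eq_zero.1 (by omega)
    exact (hcross (hπ ▸ wordPerm_cons_inv_crosses hnot)).elim

theorem wordPerm_run_one_inv (p : ℤ) (k : ℕ) (x : ℤ) :
    (wordPerm (run 1 p k))⁻¹ x =
      if x = p then p + k else if p < x ∧ x ≤ p + k then x - 1 else x := by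
  induction k generalizing p x with
  | zero =>
    simp only [run_zero, wordPerm, List.map_nil, List.prod_nil, inv_one, Perm.one_apply]
    grind
  | succ k ih =>
    rw [run_succ, wordPerm_cons_inv_apply, ih, adjSwap_apply]
    grind

theorem wordPerm_run_neg_one_inv (p : ℤ) (k : ℕ) (x : ℤ) :
    (wordPerm (run (-1) p k))⁻¹ x =
      if x = p + 1 then p + 1 - k else if p - k < x ∧ x ≤ p then x + 1 else x := by
  induction k generalizing p x with
  | zero =>
    simp only [run_zero, wordPerm, List.map_nil, List.prod_nil, inv_one, Perm.one_apply]
    grind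
  | succ k ih =>
    rw [run_succ, wordPerm_cons_inv_apply, ih, adjSwap_apply]
    grind

theorem wordPerm_hill_inv (p : ℤ) (k l : ℕ) (x : ℤ) :
    (wordPerm (zigzag 1 p k l 0))⁻¹ x =
      if x = p then p + k + 1
      else if p < x ∧ x ≤ p + k then (if p + k - l ≤ x - 1 then x else x - 1)
      else if x = p + k + 1 then p + k - l
      else if p + k - l ≤ x ∧ x < p then x + 1 else x := by
  have hzigzag : zigzag 1 p k l 0 = run 1 p k ++ run (-1) (p + k) (l + 1) := by
    simp [zigzag, run_add _ _ l 1, run_succ, run_zero, sub_eq_add_neg]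
  rw [hzigzag, wordPerm_append_inv_apply, wordPerm_run_one_inv, wordPerm_run_neg_one_inv]
  grind

theorem zigzag_eq_run_append (ε x : ℤ) (a b c : ℕ) :
    zigzag ε x a b c = run ε x a ++ zigzag (-ε) (x + ε * a) b c 0 := by
  rw [← zigzag_zero]
  simp [zigzag, run_zero]

theorem isRigid_run_neg_one (p : ℤ) (k : ℕ) : IsRigid (run (-1) p k) := by
  induction k generalizing p with
  | zero => exact IsRigid.nil
  | succ k ih =>
    have hπ := wordPerm_run_neg_one_inv p (k + 1)
    rw [run_succ] at hπ ⊢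
    refine (ih _).cons ?_ fun j _ _ => ?_ <;> rw [hπ, hπ] <;> grind

theorem isRigid_hill (p : ℤ) (k l : ℕ) : IsRigid (zigzag 1 p k l 0) := by
  induction k generalizing p with
  | zero =>
    have : zigzag 1 p 0 l 0 = run (-1) p (l + 1) := by
      simp [zigzag, run_add _ _ l 1, run_succ, run_zero, sub_eq_add_neg]
    exact this ▸ isRigid_run_neg_one p (l + 1)
  | succ k ih =>
    have hπ := wordPerm_hill_inv p (k + 1) l
    have hcount := count_zigzag_one (p + 1) k l 0
    simp only [zigzagLabel] at hcount
    rw [zigzag_succ] at hπ ⊢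
    refine (ih _).cons ?_ fun j hj _ => ?_
    · rw [hπ, hπ]
      grind
    · rw [hπ, hπ, hcount]
      rw [← List.count_pos_iff, hcount] at hj
      grind

theorem isRigid_zigzag_neg_one (x : ℤ) {a b c : ℕ} (h : a = 0 ∨ c = 0 ∨ a < b ∧ c < b) :
    IsRigid (zigzag (-1) x a b c) := by
  induction a generalizing x with
  | zero => simpa only [zigzag_zero, neg_neg] using isRigid_hill x b c
  | succ a ih =>
    have hπ (y : ℤ) := wordPerm_append_inv_apply (run (-1) x (a + 1))
      (zigzag 1 (x + -1 * (a + 1 : ℕ)) b c 0) y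
    have hzigzag := zigzag_eq_run_append (-1) x (a + 1) b c
    rw [neg_neg] at hzigzag
    simp only [← hzigzag, wordPerm_hill_inv, wordPerm_run_neg_one_inv, zigzag_succ] at hπ
    have hcount := count_zigzag_neg_one (x + -1) a b c
    simp only [zigzagLabel] at hcount
    rw [zigzag_succ]
    -- Besides `x`, only the two turning points can be descents.
    refine (ih (x + -1) (by omega)).cons ?_ fun j hj hjx hlt => ?_
    · rw [hπ, hπ]
      grind
    · rw [← List.count_pos_iff] at hj
      rw [hπ, hπ] at hlt ⊢
      rw [hcount] at hj ⊢
      clear hπ hcount ih hzigzag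
      have hturn : j = x - 1 - a ∨ j = x - 1 - a + b ∧ 0 < c := by
        rcases h with h | rfl | h <;> rcases lt_or_ge a b with hab | hab <;> grind (splits := 20)
      rcases hturn with rfl | ⟨rfl, hc⟩ <;> grind (splits := 14)

/-! ### The type `A` Coxeter group -/

theorem csA_simple_mul_simple_pow {n : ℕ} (i j : Fin n) :
    ((csA n).simple i * (csA n).simple j) ^
      (if i = j then 1 else if (j : ℕ) + 1 = i ∨ (i : ℕ) + 1 = j then 3 else 2) = 1 :=
  (csA n).simple_mul_simple_pow i j

theorem csA_simple_commute {n : ℕ} {i j : Fin n} (h : (i : ℕ) + 1 < j) :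
    Commute ((csA n).simple i) ((csA n).simple j) := by
  have hpow := csA_simple_mul_simple_pow i j
  rw [if_neg (by rintro rfl; omega), if_neg (by omega), pow_two, mul_eq_one_iff_eq_inv,
    mul_inv_rev, CoxeterSystem.inv_simple, CoxeterSystem.inv_simple] at hpow
  exact hpow

theorem csA_simple_braid {n : ℕ} {i j : Fin n} (h : (i : ℕ) + 1 = j) :
    (csA n).simple i * (csA n).simple j * (csA n).simple i =
      (csA n).simple j * (csA n).simple i * (csA n).simple j := by
  have hpow := csA_simple_mul_simple_pow i j
  rw [if_neg (by rintro rfl; omega), if_pos (.inr h)] at hpow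
  have hmul : (csA n).simple i * (csA n).simple j * (csA n).simple i *
      ((csA n).simple j * (csA n).simple i * (csA n).simple j) = 1 := by
    simpa only [pow_succ, pow_zero, one_mul, mul_assoc] using hpow
  simpa [mul_assoc] using eq_inv_of_mul_eq_one_left hmul

/-- The numbering of the generators of type `Aₙ` by `0, …, n - 1` as integers. -/
def node (n : ℕ) (i : Fin n) : ℤ := (i : ℕ)

theorem node_injective (n : ℕ) : (node n).Injective := Nat.cast_injective.comp Fin.val_injective

theorem mem_range_node {n : ℕ} {x : ℤ} : x ∈ Set.range (node n) ↔ 0 ≤ x ∧ x < n := by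
  refine ⟨?_, fun hx => ⟨⟨x.toNat, by omega⟩, ?_⟩⟩
  · rintro ⟨i, rfl⟩
    simp [node]
  · simpa [node] using hx.1

theorem exists_node_eq_of_extend_ne_one {n : ℕ} {x : ℤ}
    (hx : Function.extend (node n) (csA n).simple 1 x ≠ 1) : ∃ i, node n i = x := by
  by_contra hne
  exact hx (Function.extend_apply' _ _ _ hne)

theorem isTypeA_extend_simple (n : ℕ) :
    IsTypeA (Function.extend (node n) (csA n).simple 1) where
  mul_self x := by
    by_cases hx : Function.extend (node n) (csA n).simple 1 x = 1
    · rw [hx, one_mul]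
    · obtain ⟨i, rfl⟩ := exists_node_eq_of_extend_ne_one hx
      rw [(node_injective n).extend_apply, CoxeterSystem.simple_mul_simple_self]
  commute {x y} h := by
    by_cases hx : Function.extend (node n) (csA n).simple 1 x = 1
    · rw [hx]
      exact Commute.one_left _
    by_cases hy : Function.extend (node n) (csA n).simple 1 y = 1
    · rw [hy]
      exact Commute.one_right _
    obtain ⟨i, rfl⟩ := exists_node_eq_of_extend_ne_one hx
    obtain ⟨j, rfl⟩ := exists_node_eq_of_extend_ne_one hy
    rw [(node_injective n).extend_apply, (node_injective n).extend_apply]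
    simp only [node] at h
    exact csA_simple_commute (by exact_mod_cast h)
  braid x hx hx' := by
    obtain ⟨i, rfl⟩ := exists_node_eq_of_extend_ne_one hx
    obtain ⟨j, hj⟩ := exists_node_eq_of_extend_ne_one hx'
    rw [← hj, (node_injective n).extend_apply, (node_injective n).extend_apply]
    exact csA_simple_braid (by simp only [node] at hj; exact_mod_cast hj.symm)

theorem isTypeA_adjSwap : IsTypeA adjSwap where
  mul_self := adjSwap_mul_self
  commute {x y} h :=
    have hnodup : [x, x + 1, y, y + 1].Nodup := by
      simp only [List.nodup_cons, List.mem_cons, List.not_mem_nil, List.nodup_nil]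
      grind
    (Perm.disjoint_swap_swap hnodup : (adjSwap x).Disjoint (adjSwap y)).commute
  braid x _ _ := by
    ext y
    simp only [Perm.mul_apply, adjSwap_apply]
    grind

theorem IsTypeA.isLiftable {G : Type*} [Group G] {s : ℤ → G} (hs : IsTypeA s)
    (hne : ∀ x, s x ≠ 1) (n : ℕ) : (CoxeterMatrix.A n).IsLiftable fun i => s (node n i) := by
  have hbraid {x y : ℤ} (h : x + 1 = y) : s x * s y * s x = s y * s x * s y :=
    h ▸ hs.braid x (hne _) (hne _)
  have hpow {x y : ℤ} (h : s x * s y * s x = s y * s x * s y) : (s x * s y) ^ 3 = 1 := by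
    calc (s x * s y) ^ 3 = s x * s y * s x * (s y * s x * s y) := by
          simp only [pow_succ, pow_zero, one_mul, mul_assoc]
      _ = s x * s y * (s x * s x) * s y * s x := by rw [← h]; simp only [mul_assoc]
      _ = 1 := by rw [hs.mul_self, mul_one, mul_assoc (s x), hs.mul_self, mul_one, hs.mul_self]
  intro i j
  change (s (node n i) * s (node n j)) ^
    (if i = j then 1 else if (j : ℕ) + 1 = i ∨ (i : ℕ) + 1 = j then 3 else 2) = 1
  split_ifs with hij hadj
  · rw [hij, pow_one, hs.mul_self]
  · rcases hadj with hadj | hadj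
    · exact hpow (hbraid (by simp only [node]; exact_mod_cast hadj)).symm
    · exact hpow (hbraid (by simp only [node]; exact_mod_cast hadj))
  · have hfar : node n i + 1 < node n j ∨ node n j + 1 < node n i := by
      simp only [node]
      omega
    rw [(hs.commute_of_far hfar).mul_pow, pow_two, pow_two, hs.mul_self, hs.mul_self, mul_one]

theorem isULGA_iff_isULG {n : ℕ} {ω : List (Fin n)} :
    IsULGA n ω ↔ IsULG (csA n).simple ω := by
  have hreduced {v : List (Fin n)} : (csA n).IsReduced v ↔
      ∀ u : List (Fin n), (csA n).wordProd u = (csA n).wordProd v → v.length ≤ u.length := by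
    refine ⟨fun hv u hu => ?_, fun hv => ?_⟩
    · rw [← hv.eq, ← hu]
      exact (csA n).length_wordProd_le u
    · obtain ⟨u, hu, hprod⟩ := (csA n).exists_isReduced ((csA n).wordProd v)
      refine le_antisymm ((csA n).length_wordProd_le v) ?_
      rw [hprod, hu.eq]
      exact hv u hprod.symm
  refine ⟨fun h => ⟨hreduced.1 h.1, fun v hperm hv => h.2 v ?_ hv hperm.count_eq⟩,
    fun h => ⟨hreduced.2 h.1, fun v _ hv hcount => h.2 v (List.perm_iff_count.2 hcount) hv⟩⟩
  rw [hreduced]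
  intro u hu
  rw [hperm.length_eq]
  exact hreduced.1 h.1 u (hu.trans hv)

theorem IsULGA.isULG_extend {n : ℕ} {ω : List (Fin n)} (h : IsULGA n ω) :
    IsULG (Function.extend (node n) (csA n).simple 1) (ω.map (node n)) :=
  (isULGA_iff_isULG.1 h).map_extend_one (node_injective n)

theorem IsRigid.isULGA {n : ℕ} {ω : List (Fin n)} (h : IsRigid (ω.map (node n))) : IsULGA n ω :=
  isULGA_iff_isULG.2 <| h.isULG.of_map (node_injective n)
    ((csA n).lift ⟨_, isTypeA_adjSwap.isLiftable (fun x => by simp [adjSwap]) n⟩)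
    fun i => (csA n).lift_apply_simple _ i

/-! ### Counting the labels -/

theorem zigzagLabel_zero_right (c : ℤ) (m i : ℕ) :
    zigzagLabel c m i 0 = zigzagLabel c i m 0 := by
  funext x
  simp only [zigzagLabel]
  grind

theorem zigzagLabel_zero_left (c : ℤ) (m j : ℕ) :
    zigzagLabel c m 0 j = zigzagLabel (c + m - j) j 0 m := by
  funext x
  simp only [zigzagLabel]
  grind

theorem zigzagLabel_sub_zigzagLabel_sub_one (c : ℤ) (m i j : ℕ) (x : ℤ) :
    (zigzagLabel c m i j x : ℤ) - zigzagLabel c m i j (x - 1) =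
      (if x = c then 1 else 0) - (if x = c + m + 1 then 1 else 0) +
      ((if x = c + 1 then 1 else 0) - if x = c + i + 1 then 1 else 0) +
      ((if x = c + m - j then 1 else 0) - if x = c + m then 1 else 0) := by
  simp only [zigzagLabel]
  grind (splits := 40)

theorem zigzagLabel_eq_iff {c : ℤ} {m i j i' j' : ℕ} :
    zigzagLabel c m i j = zigzagLabel c m i' j' ↔
      i = i' ∧ j = j' ∨ i + j + 1 = m ∧ i' + j' + 1 = m := by
  constructor
  · intro h
    have hderiv (x : ℤ) : (if x = c + m - j then 1 else 0) - (if x = c + i + 1 then 1 else 0) =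
        ((if x = c + m - j' then 1 else 0) - if x = c + i' + 1 then 1 else 0 : ℤ) := by
      have h₁ := zigzagLabel_sub_zigzagLabel_sub_one c m i j x
      have h₂ := zigzagLabel_sub_zigzagLabel_sub_one c m i' j' x
      rw [h] at h₁
      linarith
    have hi := hderiv (c + i + 1)
    have hj' := hderiv (c + m - j')
    have hi' := hderiv (c + i' + 1)
    clear hderiv
    grind
  · intro h
    funext x
    simp only [zigzagLabel]
    grind

/-- The parameters of the labels of zigzags, up to the coincidences `zigzagLabel_zero_left` and
`zigzagLabel_zero_right`: the words with at most two monotone runs give the first two cases and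
those with three runs, of which the middle one is the longest, give the third. -/
def IsLabelShape (m i j : ℕ) : Prop := i = 0 ∧ j ≤ m ∨ j = 0 ∧ i ≤ m ∨ i < m ∧ j < m

theorem IsLabelShape.zigzagLabel_ne_zero_iff {m i j : ℕ} (h : IsLabelShape m i j) (c x : ℤ) :
    zigzagLabel c m i j x ≠ 0 ↔ c ≤ x ∧ x ≤ c + m := by
  simp only [zigzagLabel]
  grind [IsLabelShape]

theorem exists_isLabelShape (c : ℤ) {m i j : ℕ} (h : i = 0 ∨ j = 0 ∨ i < m ∧ j < m) :
    ∃ (c' : ℤ) (m' i' j' : ℕ), IsLabelShape m' i' j' ∧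
      zigzagLabel c m i j = zigzagLabel c' m' i' j' := by
  rcases h with rfl | rfl | h
  · rcases le_total j m with hjm | hmj
    · exact ⟨c, m, 0, j, .inl ⟨rfl, hjm⟩, rfl⟩
    · exact ⟨_, j, 0, m, .inl ⟨rfl, hmj⟩, zigzagLabel_zero_left c m j⟩
  · rcases le_total i m with him | hmi
    · exact ⟨c, m, i, 0, .inr (.inl ⟨rfl, him⟩), rfl⟩
    · exact ⟨c, i, m, 0, .inr (.inl ⟨rfl, hmi⟩), zigzagLabel_zero_right c m i⟩
  · exact ⟨c, m, i, j, .inr (.inr h), rfl⟩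

theorem IsULG.exists_count_eq_zigzagLabel {G : Type*} [Group G] {s : ℤ → G} (hs : IsTypeA s)
    {w : List ℤ} (h : IsULG s w) (hne : w ≠ []) :
    ∃ (c : ℤ) (m i j : ℕ), IsLabelShape m i j ∧ ∀ x, w.count x = zigzagLabel c m i j x := by
  obtain ⟨x, w, rfl⟩ := List.exists_cons_of_ne_nil hne
  obtain ⟨ε, hε, a, b, c, hshape, hw⟩ := h.exists_zigzag hs
  rw [hw]
  rcases hε with rfl | rfl
  · obtain ⟨c', m', i', j', hshape', hlabel⟩ := exists_isLabelShape (x + a - b) (m := b)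
      (i := c) (j := a) (by omega)
    exact ⟨c', m', i', j', hshape', fun y => by rw [count_zigzag_one, hlabel]⟩
  · obtain ⟨c', m', i', j', hshape', hlabel⟩ := exists_isLabelShape (x - a) (m := b)
      (i := a) (j := c) (by omega)
    exact ⟨c', m', i', j', hshape', fun y => by rw [count_zigzag_neg_one, hlabel]⟩

/-- The pairs `(i, j)` such that `IsLabelShape m i j`, with the single representative `(0, m - 1)`
for all pairs satisfying `i + j + 1 = m`, which give the same label by `zigzagLabel_eq_iff`. -/
def labelPairs : ℕ → Finset (ℕ × ℕ)
  | 0 => {(0, 0)}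
  | m + 1 => insert (0, m) <| insert (m + 1, 0) <| insert (0, m + 1) <|
      (Finset.range (m + 1) ×ˢ Finset.range (m + 1)) \ Finset.HasAntidiagonal.antidiagonal m

theorem mem_labelPairs {m : ℕ} {q : ℕ × ℕ} :
    q ∈ labelPairs m ↔ IsLabelShape m q.1 q.2 ∧ (q.1 + q.2 + 1 = m → q.1 = 0) := by
  obtain ⟨i, j⟩ := q
  cases m <;>
    simp only [labelPairs, IsLabelShape, Finset.mem_singleton, Finset.mem_insert, Finset.mem_sdiff,
      Finset.mem_product, Finset.mem_range, Finset.HasAntidiagonal.mem_antidiagonal,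
      Prod.mk.injEq] <;>
    omega

theorem card_labelPairs_succ (m : ℕ) : (labelPairs (m + 1)).card = m ^ 2 + m + 3 := by
  have hsub : Finset.HasAntidiagonal.antidiagonal m ⊆
      Finset.range (m + 1) ×ˢ Finset.range (m + 1) := by
    intro q hq
    rw [Finset.HasAntidiagonal.mem_antidiagonal] at hq
    simp only [Finset.mem_product, Finset.mem_range]
    omega
  have hsquare : (m + 1) * (m + 1) = m ^ 2 + m + (m + 1) := by ring
  rw [labelPairs, Finset.card_insert_of_notMem, Finset.card_insert_of_notMem,
    Finset.card_insert_of_notMem, Finset.card_sdiff_of_subset hsub, Finset.card_product,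
    Finset.card_range, Finset.Nat.card_antidiagonal, hsquare, Nat.add_sub_cancel] <;>
  simp

theorem three_mul_sum_card_labelPairs (n : ℕ) :
    3 * ∑ m ∈ Finset.range (n + 1), (labelPairs m).card = n ^ 3 + 8 * n + 3 := by
  induction n with
  | zero => simp [labelPairs]
  | succ n ih =>
    rw [Finset.sum_range_succ, mul_add, ih, card_labelPairs_succ]
    ring

/-- The parameters `⟨m, c, i, j⟩` of the nonzero labels of uniquely labelled geodesics in type `A`
with `n` generators: the label is supported on the interval from `c` to `c + m`. -/
def labelParams (n : ℕ) : Finset (Σ _ : ℕ, ℕ × ℕ × ℕ) :=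
  (Finset.range n).sigma fun m => Finset.range (n - m) ×ˢ labelPairs m

theorem mem_labelParams {n : ℕ} {q : Σ _ : ℕ, ℕ × ℕ × ℕ} :
    q ∈ labelParams n ↔ q.2.1 + q.1 < n ∧ q.2.2 ∈ labelPairs q.1 := by
  simp only [labelParams, Finset.mem_sigma, Finset.mem_product, Finset.mem_range]
  constructor
  · rintro ⟨hm, hc, hq⟩
    exact ⟨by omega, hq⟩
  · rintro ⟨hn, hq⟩
    exact ⟨by omega, by omega, hq⟩

theorem card_labelParams (n : ℕ) :
    (labelParams n).card = ∑ m ∈ Finset.range n, (n - m) * (labelPairs m).card := by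
  simp [labelParams, Finset.card_sigma]

theorem card_labelParams_succ (n : ℕ) : (labelParams (n + 1)).card =
    (labelParams n).card + ∑ m ∈ Finset.range (n + 1), (labelPairs m).card := by
  have hlast : ∑ m ∈ Finset.range n, (n - m) * (labelPairs m).card =
      ∑ m ∈ Finset.range (n + 1), (n - m) * (labelPairs m).card := by
    simp [Finset.sum_range_succ]
  rw [card_labelParams, card_labelParams, hlast, ← Finset.sum_add_distrib]
  refine Finset.sum_congr rfl fun m hm => ?_
  rw [Nat.succ_sub (Finset.mem_range_succ_iff.1 hm), Nat.succ_mul]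

theorem twelve_mul_card_labelParams_add_one (n : ℕ) : (12 * ((labelParams n).card + 1) : ℤ) =
    n ^ 4 - 2 * n ^ 3 + 17 * n ^ 2 - 4 * n + 12 := by
  induction n with
  | zero => simp [labelParams]
  | succ n ih =>
    have hsum := three_mul_sum_card_labelPairs n
    zify at hsum
    rw [card_labelParams_succ]
    push_cast
    linarith

/-- The label with the given parameters, as a function on the generators. -/
def labelOf (n : ℕ) (q : Σ _ : ℕ, ℕ × ℕ × ℕ) (x : Fin n) : ℕ :=
  zigzagLabel q.2.1 q.1 q.2.2.1 q.2.2.2 (node n x)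

theorem labelOf_ne_zero {n : ℕ} {q : Σ _ : ℕ, ℕ × ℕ × ℕ} (hq : q ∈ labelParams n) :
    labelOf n q ≠ 0 := by
  obtain ⟨hn, hpair⟩ := mem_labelParams.1 hq
  intro h
  exact ((mem_labelPairs.1 hpair).1.zigzagLabel_ne_zero_iff q.2.1 q.2.1).2 (by omega)
    (congrFun h ⟨q.2.1, by omega⟩)

theorem zigzagLabel_eq_of_labelOf_eq {n : ℕ} {q q' : Σ _ : ℕ, ℕ × ℕ × ℕ} (hq : q ∈ labelParams n)
    (hq' : q' ∈ labelParams n) (h : labelOf n q = labelOf n q') :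
    zigzagLabel q.2.1 q.1 q.2.2.1 q.2.2.2 = zigzagLabel q'.2.1 q'.1 q'.2.2.1 q'.2.2.2 := by
  have hvanish {p : Σ _ : ℕ, ℕ × ℕ × ℕ} (hp : p ∈ labelParams n) {x : ℤ}
      (hx : x ∉ Set.range (node n)) : zigzagLabel p.2.1 p.1 p.2.2.1 p.2.2.2 x = 0 := by
    obtain ⟨hn, hpair⟩ := mem_labelParams.1 hp
    rw [mem_range_node] at hx
    by_contra hne
    have := ((mem_labelPairs.1 hpair).1.zigzagLabel_ne_zero_iff _ _).1 hne
    omega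
  funext x
  by_cases hx : x ∈ Set.range (node n)
  · obtain ⟨y, rfl⟩ := hx
    exact congrFun h y
  · rw [hvanish hq hx, hvanish hq' hx]

theorem labelOf_injOn (n : ℕ) : Set.InjOn (labelOf n) (labelParams n) := by
  rintro ⟨m, c, i, j⟩ hq ⟨m', c', i', j'⟩ hq' h
  have hlabel := zigzagLabel_eq_of_labelOf_eq hq hq' h
  obtain ⟨hshape, hrep⟩ := mem_labelPairs.1 (mem_labelParams.1 hq).2
  obtain ⟨hshape', hrep'⟩ := mem_labelPairs.1 (mem_labelParams.1 hq').2
  dsimp only at hlabel hshape hrep hshape' hrep'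
  have hsupport (x : ℤ) : (c : ℤ) ≤ x ∧ x ≤ c + m ↔ (c' : ℤ) ≤ x ∧ x ≤ c' + m' := by
    rw [← hshape.zigzagLabel_ne_zero_iff, hlabel, hshape'.zigzagLabel_ne_zero_iff]
  obtain ⟨rfl, rfl⟩ : c = c' ∧ m = m' := by
    have hleft := hsupport c
    have hleft' := hsupport c'
    have hright := hsupport (c + m)
    have hright' := hsupport (c' + m')
    omega
  rw [zigzagLabel_eq_iff] at hlabel
  obtain ⟨rfl, rfl⟩ : i = i' ∧ j = j' := by omega
  rfl

theorem exists_mem_labelPairs_zigzagLabel_eq {m i j : ℕ} (h : IsLabelShape m i j) (c : ℤ) :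
    ∃ q ∈ labelPairs m, zigzagLabel c m i j = zigzagLabel c m q.1 q.2 := by
  by_cases hij : i + j + 1 = m
  · refine ⟨(0, m - 1), mem_labelPairs.2 ⟨.inl ⟨rfl, Nat.sub_le m 1⟩, fun _ => rfl⟩, ?_⟩
    exact zigzagLabel_eq_iff.2 (.inr ⟨hij, by omega⟩)
  · exact ⟨(i, j), mem_labelPairs.2 ⟨h, fun hij' => (hij hij').elim⟩, rfl⟩

theorem count_map_node {n : ℕ} (ω : List (Fin n)) (x : Fin n) :
    (ω.map (node n)).count (node n x) = ω.count x :=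
  List.count_map_of_injective ω _ (node_injective n) x

theorem IsULGA.exists_labelOf {n : ℕ} {ω : List (Fin n)} (h : IsULGA n ω) (hne : ω ≠ []) :
    ∃ q ∈ labelParams n, ∀ x, ω.count x = labelOf n q x := by
  obtain ⟨c, m, i, j, hshape, hcount⟩ :=
    h.isULG_extend.exists_count_eq_zigzagLabel (isTypeA_extend_simple n) (by simpa using hne)
  have hrange {x : ℤ} (hx : c ≤ x ∧ x ≤ c + m) : 0 ≤ x ∧ x < n := by
    rw [← hshape.zigzagLabel_ne_zero_iff, ← hcount, ← Nat.pos_iff_ne_zero, List.count_pos_iff] at hx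
    obtain ⟨y, -, hy⟩ := List.mem_map.1 hx
    exact mem_range_node.1 ⟨y, hy⟩
  have hc := hrange (x := c) (by omega)
  have hcm := hrange (x := c + m) (by omega)
  obtain ⟨c, rfl⟩ := Int.eq_ofNat_of_zero_le hc.1
  obtain ⟨q, hq, hlabel⟩ := exists_mem_labelPairs_zigzagLabel_eq hshape c
  have hn : c + m < n := by omega
  exact ⟨⟨m, c, q⟩, mem_labelParams.2 ⟨hn, hq⟩,
    fun x => by rw [← count_map_node, hcount, hlabel, labelOf]⟩

theorem exists_isULGA_labelOf {n : ℕ} {q : Σ _ : ℕ, ℕ × ℕ × ℕ} (hq : q ∈ labelParams n) :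
    ∃ ω, IsULGA n ω ∧ ∀ x, ω.count x = labelOf n q x := by
  obtain ⟨m, c, i, j⟩ := q
  obtain ⟨hn, hpair⟩ := mem_labelParams.1 hq
  have hshape := (mem_labelPairs.1 hpair).1
  dsimp only at hn hshape
  have hcount (x : ℤ) : (zigzag (-1) (c + i) i m j).count x = zigzagLabel c m i j x := by
    rw [count_zigzag_neg_one, add_sub_cancel_right]
  have hrigid : IsRigid (zigzag (-1) (c + i) i m j) :=
    isRigid_zigzag_neg_one _ (by unfold IsLabelShape at hshape; omega)
  obtain ⟨ω, hω⟩ : zigzag (-1) (c + i) i m j ∈ Set.range (List.map (node n)) := by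
    rw [Set.range_list_map]
    intro x hx
    rw [← List.count_pos_iff, Nat.pos_iff_ne_zero, hcount, hshape.zigzagLabel_ne_zero_iff] at hx
    exact mem_range_node.2 (by omega)
  rw [← hω] at hrigid hcount
  exact ⟨ω, hrigid.isULGA, fun x => by rw [← count_map_node, hcount, labelOf]⟩

theorem exists_isULGA_count_iff {n : ℕ} {ι : Fin n → ℕ} :
    (∃ ω : List (Fin n), IsULGA n ω ∧ ∀ i : Fin n, ω.count i = ι i) ↔
      ι ∈ insert 0 ((labelParams n).image (labelOf n)) := by
  rw [Finset.mem_insert, Finset.mem_image]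
  constructor
  · rintro ⟨ω, hω, hι⟩
    rcases eq_or_ne ω [] with rfl | hne
    · exact .inl (funext fun i => by simp [← hι])
    · obtain ⟨q, hq, hlabel⟩ := hω.exists_labelOf hne
      exact .inr ⟨q, hq, funext fun i => by rw [← hι, hlabel]⟩
  · rintro (rfl | ⟨q, hq, rfl⟩)
    · exact ⟨[], IsRigid.isULGA IsRigid.nil, by simp⟩
    · exact exists_isULGA_labelOf hq

theorem natCard_labels (n : ℕ) : Nat.card {ι : Fin n → ℕ //
    ∃ ω : List (Fin n), IsULGA n ω ∧ ∀ i : Fin n, ω.count i = ι i} =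
      (labelParams n).card + 1 := by
  rw [Nat.subtype_card _ fun ι => exists_isULGA_count_iff.symm,
    Finset.card_insert_of_notMem, Finset.card_image_of_injOn (labelOf_injOn n)]
  rw [Finset.mem_image]
  rintro ⟨q, hq, h⟩
  exact labelOf_ne_zero hq h

theorem number_of_labels_of_ulgs_in_type_A (n : ℕ) (hn : 1 ≤ n) :
    12 * (Nat.card {ι : Fin n → ℕ //
        ∃ ω : List (Fin n), IsULGA n ω ∧ ∀ i : Fin n, ω.count i = ι i} : ℤ) =
      (n : ℤ) ^ 4 - 2 * (n : ℤ) ^ 3 + 17 * (n : ℤ) ^ 2 - 4 * (n : ℤ) + 12 := by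
  rw [natCard_labels]
  exact_mod_cast twelve_mul_card_labelParams_add_one n
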